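/- Let b ≥ 2 and let n ≥ 1 have standard base-b digits n_l n_{l−1} ⋯ n_0. For 0 ≤ β ≤ l, writing n^{(k)} = n mod b^{l+1−k} (the number whose digits are the last l+1−k digits n_{l−k} ⋯ n_0 of n) and n′ = n^{(1)}, one has A_n(β) = (n_l + 1) · A_{n′}(β) + Σ_{i=1}^{β} n_l · (∏_{j=1}^{i−1} (b − n_{l−j})) · (b − n_{l−i} − 1) · A_{n^{(i+1)}}(β − i). -/

import Mathlib

/-- The number of integers `0 ≤ m ≤ n` such that `C(n,m)` is not divisible by `k`,
i.e. the number of nonzero entries on row `n` of Pascal's triangle modulo `k`. -/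
def rowCount (k n : ℕ) : ℕ :=
  ((Finset.range (n + 1)).filter fun m => ¬ k ∣ n.choose m).card

/-- The number of borrows when subtracting `m` from `n` in base `b` (for `m ≤ n`):
the number of indices `i ≥ 0` with `m mod b^(i+1) > n mod b^(i+1)`. -/
def borrowCount (b n m : ℕ) : ℕ :=
  ((Finset.range (Nat.digits b n).length).filter fun i => n % b ^ (i + 1) < m % b ^ (i + 1)).card

/-- `A_n(β)`: the number of `0 ≤ m ≤ n` with exactly `β` borrows
when subtracting `m` from `n` in base `b`. -/
def borrowA (b n β : ℕ) : ℕ :=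
  ((Finset.range (n + 1)).filter fun m => borrowCount b n m = β).card

/-- `B_n(β)` with respect to `L` digit positions: the number of `n < m ≤ b^L - 1` such that
exactly `β` of the indices `0 ≤ i ≤ L - 1` satisfy `m mod b^(i+1) > n mod b^(i+1)`. -/
def borrowB (b L n β : ℕ) : ℕ :=
  ((Finset.Ioc n (b ^ L - 1)).filter fun m =>
    ((Finset.range L).filter fun i => n % b ^ (i + 1) < m % b ^ (i + 1)).card = β).card

/-- The base-`b` digit string of `n`, most significant digit first (empty for `n = 0`). -/
def wordOf (b n : ℕ) : List ℕ := (Nat.digits b n).reverse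

/-- `|n|_w`: the number of occurrences of `w` as a contiguous subword of the
base-`b` digit string of `n`. -/
def subwordCount (b n : ℕ) (w : List ℕ) : ℕ :=
  ((Finset.range ((wordOf b n).length + 1 - w.length)).filter fun s =>
    ((wordOf b n).drop s).take w.length = w).card

/-- `c(w_k ⋯ w_0)` for a word `w = [w_k, …, w_0]` (most significant letter first):
`(w_k/(w_k+1)) · (∏_{h=1}^{k−1} (b−w_{k−h})/(w_{k−h}+1)) · (b−w_0−1)/(w_0+1)`. -/
def cword (b : ℕ) (w : List ℕ) : ℚ :=
  ((w.getD 0 0 : ℚ) / ((w.getD 0 0 : ℚ) + 1)) *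
    (∏ h ∈ Finset.Ico 1 (w.length - 1),
      ((b : ℚ) - (w.getD h 0 : ℚ)) / ((w.getD h 0 : ℚ) + 1)) *
    (((b : ℚ) - (w.getD (w.length - 1) 0 : ℚ) - 1) / ((w.getD (w.length - 1) 0 : ℚ) + 1))

/-- The sum `Σ c(v)c(w)⋯c(z)` over all sets of pairwise nonoverlapping contiguous subwords
of `W` (identified by their position intervals: a pair `(s, len)` denotes the subword
occupying positions `s, …, s+len-1`) whose multiset of lengths equals `P`. -/
def nonoverlapSum (b : ℕ) (W : List ℕ) (P : Multiset ℕ) : ℚ :=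
  ∑ S ∈ ((Finset.range W.length ×ˢ Finset.Icc 1 W.length).powerset.filter fun S =>
      Multiset.map Prod.snd S.val = P ∧
      (∀ q ∈ S, q.1 + q.2 ≤ W.length) ∧
      (∀ q ∈ S, ∀ r ∈ S, q ≠ r → q.1 + q.2 ≤ r.1 ∨ r.1 + r.2 ≤ q.1)),
    ∏ q ∈ S, cword b ((W.drop q.1).take q.2)

/-!
Write `A L β` and `B L β` for the number of `m ≤ n`, respectively of `m` with `n < m < b ^ L`, that
cause `β` borrows, where `n` stands for the number formed by its last `L` digits. Prepending a digit
`d` to `n` and a digit `e` to `m` leaves the borrows at the old positions unchanged, and the new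
position borrows exactly when the extended `m` exceeds the extended `n`: always for `d < e`, never
for `e < d`, and according to the comparison of the tails for `e = d`. Counting the digits `e` gives
* `A (L + 1) β = (d + 1) * A L β + d * B L β`,
* `B (L + 1) (β + 1) = (b - d - 1) * A L β + (b - d) * B L β`.

The formula is the first recurrence with `B` unrolled by the second, down to `B L 0 = 0`.
-/

open Finset

theorem card_filter_range_mul (N k : ℕ) (p : ℕ → Prop) [DecidablePred p] :
    #{m ∈ range (N * k) | p m} = ∑ e ∈ range k, #{s ∈ range N | p (s + N * e)} := by
  induction k with
  | zero => simp
  | succ k ih =>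
    rw [sum_range_succ_comm, ← ih, mul_add_one, add_comm (N * k)]
    simp only [← Nat.count_eq_card_filter_range, Nat.count_add']

theorem sum_range_eq_of_eq_below_of_eq_above {M : Type*} [AddCommMonoid M] {f : ℕ → M} {d k : ℕ}
    {x z : M} (hd : d < k) (below : ∀ e < d, f e = x) (above : ∀ e, d < e → e < k → f e = z) :
    ∑ e ∈ range k, f e = d • x + f d + (k - d - 1) • z := by
  have sum_below : ∑ e ∈ range d, f e = d • x := by
    simpa using sum_eq_card_nsmul fun e he => below e (mem_range.1 he)
  have sum_above : ∑ e ∈ Ico (d + 1) k, f e = (k - d - 1) • z := by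
    simpa [Nat.sub_sub] using sum_eq_card_nsmul fun e (he : e ∈ Ico (d + 1) k) =>
      above e (mem_Ico.1 he).1 (mem_Ico.1 he).2
  rw [← sum_range_add_sum_Ico f hd, sum_range_succ, sum_below, sum_above]

theorem add_mul_lt_add_mul_of_lt {N d e s : ℕ} (r : ℕ) (hs : s < N) (hed : e < d) :
    s + N * e < r + N * d :=
  calc
    s + N * e < N + N * e := by gcongr
    _ = N * (e + 1) := by ring
    _ ≤ N * d := by gcongr; exact hed
    _ ≤ r + N * d := Nat.le_add_left _ _

theorem add_pow_mul_lt_pow_succ {b L d r : ℕ} (hd : d < b) (hr : r < b ^ L) :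
    r + b ^ L * d < b ^ (L + 1) := by
  simpa [pow_succ] using add_mul_lt_add_mul_of_lt 0 hr hd

@[to_additive]
theorem prod_Icc_eq_prod_range_succ {M : Type*} [CommMonoid M] (f : ℕ → M) (k : ℕ) :
    ∏ i ∈ Icc 1 k, f i = ∏ i ∈ range k, f (i + 1) := by
  rw [← Ico_add_one_right_eq_Icc, range_eq_Ico, prod_Ico_add']

/-- The number of borrows at the `L` lowest positions when subtracting `m` from `n` in base `b`.
Fixing `L` makes sense of the count also for `n < m`, and pads both numbers with leading zeros. -/
def borrowCountBelow (b L n m : ℕ) : ℕ :=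
  #{i ∈ range L | n % b ^ (i + 1) < m % b ^ (i + 1)}

theorem borrowCount_eq_borrowCountBelow {b L n m : ℕ} (hb : 1 < b) (hn : n < b ^ L) (hm : m ≤ n) :
    borrowCount b n m = borrowCountBelow b L n m := by
  refine congrArg card (filter_subset_filter _ ?_ |>.antisymm fun i hi => ?_)
  · exact range_subset_range.2 ((Nat.digits_length_le_iff hb n).2 hn)
  · obtain ⟨-, borrow⟩ := mem_filter.1 hi
    refine mem_filter.2 ⟨mem_range.2 ?_, borrow⟩
    by_contra! hlen
    have n_lt : n < b ^ (i + 1) :=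
      (Nat.lt_base_pow_length_digits hb).trans_le (Nat.pow_le_pow_right hb.le (by omega))
    rw [Nat.mod_eq_of_lt n_lt, Nat.mod_eq_of_lt (hm.trans_lt n_lt)] at borrow
    exact borrow.not_ge hm

theorem borrowCountBelow_succ_of_lt {b L n m : ℕ} (hn : n < b ^ (L + 1)) (hm : m < b ^ (L + 1)) :
    borrowCountBelow b (L + 1) n m = borrowCountBelow b L n m + if n < m then 1 else 0 := by
  simp only [borrowCountBelow, card_filter, sum_range_succ, Nat.mod_eq_of_lt hn,
    Nat.mod_eq_of_lt hm]

theorem borrowCountBelow_add_pow_mul (b L d e r s : ℕ) :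
    borrowCountBelow b L (r + b ^ L * d) (s + b ^ L * e) = borrowCountBelow b L r s := by
  have add_mod (t c i : ℕ) (hi : i < L) :
      (t + b ^ L * c) % b ^ (i + 1) = t % b ^ (i + 1) := by
    obtain ⟨q, hq⟩ := pow_dvd_pow b hi
    rw [hq, mul_assoc, Nat.add_mul_mod_self_left]
  refine congrArg card (filter_congr fun i hi => ?_)
  rw [add_mod r d i (mem_range.1 hi), add_mod s e i (mem_range.1 hi)]

theorem borrowCountBelow_succ_add_pow_mul {b L d e r s : ℕ} (hd : d < b) (he : e < b)
    (hr : r < b ^ L) (hs : s < b ^ L) :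
    borrowCountBelow b (L + 1) (r + b ^ L * d) (s + b ^ L * e) =
      borrowCountBelow b L r s + if r + b ^ L * d < s + b ^ L * e then 1 else 0 := by
  rw [borrowCountBelow_succ_of_lt (add_pow_mul_lt_pow_succ hd hr) (add_pow_mul_lt_pow_succ he hs),
    borrowCountBelow_add_pow_mul]

theorem borrowA_eq_card_filter {b L n : ℕ} (hb : 1 < b) (hn : n < b ^ L) (β : ℕ) :
    borrowA b n β = #{m ∈ range (b ^ L) | m ≤ n ∧ borrowCountBelow b L n m = β} := by
  refine congrArg card (ext fun m => ?_)
  simp only [mem_filter, mem_range, Nat.lt_succ_iff]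
  constructor
  · rintro ⟨hm, hβ⟩
    exact ⟨hm.trans_lt hn, hm, borrowCount_eq_borrowCountBelow hb hn hm ▸ hβ⟩
  · rintro ⟨-, hm, hβ⟩
    exact ⟨hm, (borrowCount_eq_borrowCountBelow hb hn hm).trans hβ⟩

theorem borrowB_eq_card_filter (b L n β : ℕ) :
    borrowB b L n β = #{m ∈ range (b ^ L) | n < m ∧ borrowCountBelow b L n m = β} := by
  refine congrArg card (ext fun m => ?_)
  simp only [mem_filter, mem_Ioc, borrowCountBelow]
  grind

theorem borrowA_add_borrowB {b L n : ℕ} (hb : 1 < b) (hn : n < b ^ L) (β : ℕ) :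
    borrowA b n β + borrowB b L n β = #{m ∈ range (b ^ L) | borrowCountBelow b L n m = β} := by
  rw [borrowA_eq_card_filter hb hn, borrowB_eq_card_filter,
    ← card_filter_add_card_filter_not (s := {m ∈ range (b ^ L) | borrowCountBelow b L n m = β})
      (· ≤ n)]
  simp only [filter_filter, not_le, and_comm]

theorem borrowB_zero (b L n : ℕ) : borrowB b L n 0 = 0 := by
  rw [borrowB_eq_card_filter, card_eq_zero, filter_eq_empty_iff]
  rintro m hm ⟨hnm, no_borrow⟩
  rw [mem_range] at hm
  cases L with
  | zero => exact hm.not_ge (Nat.one_le_of_lt hnm)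
  | succ L =>
    rw [borrowCountBelow_succ_of_lt (hnm.trans hm) hm, if_pos hnm] at no_borrow
    exact Nat.succ_ne_zero _ no_borrow

section Recurrences

variable {b L d r : ℕ}

theorem borrowA_add_pow_mul (hb : 1 < b) (hd : d < b) (hr : r < b ^ L) (β : ℕ) :
    borrowA b (r + b ^ L * d) β = (d + 1) * borrowA b r β + d * borrowB b L r β := by
  rw [borrowA_eq_card_filter hb (add_pow_mul_lt_pow_succ hd hr), pow_succ, card_filter_range_mul,
    sum_range_eq_of_eq_below_of_eq_above (x := borrowA b r β + borrowB b L r β) (z := 0) hd]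
  · have equal_digit : #{s ∈ range (b ^ L) | s + b ^ L * d ≤ r + b ^ L * d ∧
        borrowCountBelow b (L + 1) (r + b ^ L * d) (s + b ^ L * d) = β} = borrowA b r β := by
      rw [borrowA_eq_card_filter hb hr]
      refine congrArg card (filter_congr fun s hs => ?_)
      rw [borrowCountBelow_succ_add_pow_mul hd hd hr (mem_range.1 hs)]
      grind
    rw [equal_digit, smul_eq_mul, smul_zero]
    ring
  · intro e he
    rw [borrowA_add_borrowB hb hr]
    refine congrArg card (filter_congr fun s hs => ?_)
    have m_lt_n := add_mul_lt_add_mul_of_lt r (mem_range.1 hs) he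
    rw [borrowCountBelow_succ_add_pow_mul hd (he.trans hd) hr (mem_range.1 hs),
      if_neg m_lt_n.not_gt, add_zero, and_iff_right m_lt_n.le]
  · intro e he _
    rw [card_eq_zero, filter_eq_empty_iff]
    exact fun s _ h => (add_mul_lt_add_mul_of_lt s hr he).not_ge h.1

theorem borrowB_succ_add_pow_mul (hb : 1 < b) (hd : d < b) (hr : r < b ^ L) (β : ℕ) :
    borrowB b (L + 1) (r + b ^ L * d) (β + 1) =
      (b - d - 1) * borrowA b r β + (b - d) * borrowB b L r β := by
  rw [borrowB_eq_card_filter, pow_succ, card_filter_range_mul,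
    sum_range_eq_of_eq_below_of_eq_above (x := 0) (z := borrowA b r β + borrowB b L r β) hd]
  · have equal_digit : #{s ∈ range (b ^ L) | r + b ^ L * d < s + b ^ L * d ∧
        borrowCountBelow b (L + 1) (r + b ^ L * d) (s + b ^ L * d) = β + 1} =
          borrowB b L r β := by
      rw [borrowB_eq_card_filter]
      refine congrArg card (filter_congr fun s hs => ?_)
      rw [borrowCountBelow_succ_add_pow_mul hd hd hr (mem_range.1 hs)]
      grind
    obtain ⟨k, hk⟩ : ∃ k, b - d = k + 1 := Nat.exists_eq_succ_of_ne_zero (by omega)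
    rw [equal_digit, smul_zero, smul_eq_mul, hk, Nat.add_sub_cancel]
    ring
  · intro e he
    rw [card_eq_zero, filter_eq_empty_iff]
    exact fun s hs h => (add_mul_lt_add_mul_of_lt r (mem_range.1 hs) he).not_gt h.1
  · intro e he heb
    rw [borrowA_add_borrowB hb hr]
    refine congrArg card (filter_congr fun s hs => ?_)
    have n_lt_m := add_mul_lt_add_mul_of_lt s hr he
    rw [borrowCountBelow_succ_add_pow_mul hd heb hr (mem_range.1 hs), if_pos n_lt_m,
      Nat.add_right_cancel_iff, and_iff_right n_lt_m]

end Recurrences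

theorem borrowA_mod_pow_succ {b : ℕ} (hb : 1 < b) (n L β : ℕ) :
    borrowA b (n % b ^ (L + 1)) β =
      (n / b ^ L % b + 1) * borrowA b (n % b ^ L) β +
        n / b ^ L % b * borrowB b L (n % b ^ L) β := by
  rw [Nat.mod_pow_succ, borrowA_add_pow_mul hb (Nat.mod_lt _ hb.pos) (Nat.mod_lt _ (by positivity))]

theorem borrowB_succ_mod_pow_succ {b : ℕ} (hb : 1 < b) (n L β : ℕ) :
    borrowB b (L + 1) (n % b ^ (L + 1)) (β + 1) =
      (b - n / b ^ L % b - 1) * borrowA b (n % b ^ L) β +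
        (b - n / b ^ L % b) * borrowB b L (n % b ^ L) β := by
  rw [Nat.mod_pow_succ,
    borrowB_succ_add_pow_mul hb (Nat.mod_lt _ hb.pos) (Nat.mod_lt _ (by positivity))]

theorem borrowB_mod_pow_eq_sum {b L β : ℕ} (hb : 1 < b) (n : ℕ) (hβ : β ≤ L) :
    borrowB b L (n % b ^ L) β =
      ∑ i ∈ Icc 1 β, (∏ j ∈ Icc 1 (i - 1), (b - n / b ^ (L - j) % b)) *
        (b - n / b ^ (L - i) % b - 1) * borrowA b (n % b ^ (L - i)) (β - i) := by
  simp only [sum_Icc_eq_sum_range_succ, prod_Icc_eq_prod_range_succ, Nat.add_sub_cancel]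
  induction β generalizing L with
  | zero => simp [borrowB_zero]
  | succ β ih =>
    obtain ⟨L, rfl⟩ := Nat.exists_eq_add_of_le' (Nat.one_le_of_lt hβ)
    rw [borrowB_succ_mod_pow_succ hb, ih (by omega), sum_range_succ', add_comm, mul_sum]
    simp only [prod_range_succ', Nat.add_sub_add_right, prod_range_zero, zero_add, one_mul,
      Nat.sub_zero, Nat.add_sub_cancel]
    congr 1
    exact sum_congr rfl fun i _ => by ring

/-- For `b ≥ 2`, `n ≥ 1` with base-`b` digits `n_l ⋯ n_0`, and `0 ≤ β ≤ l`, writing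
`n^{(k)} = n mod b^{l+1−k}` and `n' = n^{(1)} = n mod b^l`:
`A_n(β) = (n_l + 1) · A_{n'}(β)
  + Σ_{i=1}^{β} n_l · (∏_{j=1}^{i−1} (b − n_{l−j})) · (b − n_{l−i} − 1) · A_{n^{(i+1)}}(β−i)`. -/
theorem stmt7 (b : ℕ) (hb : 2 ≤ b) (n l β : ℕ) (hn : 1 ≤ n)
    (hl : (Nat.digits b n).length = l + 1) (hβ : β ≤ l) :
    borrowA b n β =
      (n / b ^ l % b + 1) * borrowA b (n % b ^ l) β +
        ∑ i ∈ Finset.Icc 1 β,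
          (n / b ^ l % b) * (∏ j ∈ Finset.Icc 1 (i - 1), (b - n / b ^ (l - j) % b)) *
            (b - n / b ^ (l - i) % b - 1) * borrowA b (n % b ^ (l - i)) (β - i) := by
  have n_mod : n % b ^ (l + 1) = n :=
    Nat.mod_eq_of_lt (hl ▸ Nat.lt_base_pow_length_digits hb)
  calc
    borrowA b n β = borrowA b (n % b ^ (l + 1)) β := by rw [n_mod]
    _ = (n / b ^ l % b + 1) * borrowA b (n % b ^ l) β +
          n / b ^ l % b * borrowB b l (n % b ^ l) β := borrowA_mod_pow_succ hb n l β
    _ = _ := by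
      simp only [borrowB_mod_pow_eq_sum hb n hβ, mul_sum, mul_assoc]
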